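/- arXiv:2005.09269 — 2 statements merged into one kernel-verified Lean document; each statement's English description precedes it below -/
import Mathlib

section
/- Let H = {rrr, rrb, rry} (the patterns: a monochromatic red triangle, a triangle with two red edges and one blue edge, and a triangle with two red edges and one yellow edge; equivalently, no two adjacent red edges are allowed). Then for every integer n ≥ 3, h_2(n, H) = ⌈n/2⌉. -/
/-- The three edge colors: red, blue, yellow. -/
inductive Col : Type
  | r | b | y
  deriving DecidableEq

/-- A (symmetric) 3-edge-coloring of the complete graph `K_n` on vertex set `Fin n`. -/
structure Coloring (n : ℕ) where
  col : Fin n → Fin n → Col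
  symm : ∀ i j, col i j = col j i

/-- The pattern (multiset of edge colors) of the triangle on vertices `u, v, w`. -/
def triPattern {n : ℕ} (c : Coloring n) (u v w : Fin n) : Multiset Col :=
  {c.col u v, c.col v w, c.col u w}

/-- The coloring `c` contains the pattern `P`: some triangle has color multiset `P`. -/
def Contains {n : ℕ} (c : Coloring n) (P : Multiset Col) : Prop :=
  ∃ u v w : Fin n, u ≠ v ∧ v ≠ w ∧ u ≠ w ∧ triPattern c u v w = P

/-- The coloring `c` avoids every pattern in the family `H`. -/
def Avoids {n : ℕ} (c : Coloring n) (H : Set (Multiset Col)) : Prop :=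
  ∀ P ∈ H, ¬ Contains c P

/-- A vertex set `S` is two-colored under `c`: the edges inside `S` use at most
two of the three colors, i.e. some color is missing on the edges inside `S`. -/
def TwoColored {n : ℕ} (c : Coloring n) (S : Finset (Fin n)) : Prop :=
  ∃ x : Col, ∀ i ∈ S, ∀ j ∈ S, i ≠ j → c.col i j ≠ x

/-- `h2 c` is the maximum size of a vertex set whose induced edges use at most
two of the three colors. -/
noncomputable def h2 {n : ℕ} (c : Coloring n) : ℕ :=
  sSup {k | ∃ S : Finset (Fin n), TwoColored c S ∧ S.card = k}

/-- `h2n n H = min { h2 c : c a 3-edge-coloring of K_n avoiding all patterns in H }`. -/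
noncomputable def h2n (n : ℕ) (H : Set (Multiset Col)) : ℕ :=
  sInf {m | ∃ c : Coloring n, Avoids c H ∧ h2 c = m}

/-- Pattern abbreviations. -/
def Prrr : Multiset Col := {Col.r, Col.r, Col.r}
def Pbbb : Multiset Col := {Col.b, Col.b, Col.b}
def Pyyy : Multiset Col := {Col.y, Col.y, Col.y}
def Prrb : Multiset Col := {Col.r, Col.r, Col.b}
def Prry : Multiset Col := {Col.r, Col.r, Col.y}
def Pbbr : Multiset Col := {Col.b, Col.b, Col.r}
def Pbby : Multiset Col := {Col.b, Col.b, Col.y}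
def Pyyr : Multiset Col := {Col.y, Col.y, Col.r}
def Pyyb : Multiset Col := {Col.y, Col.y, Col.b}
def Prby : Multiset Col := {Col.r, Col.b, Col.y}

/-
Avoiding the three patterns means that the red graph has maximum degree at most one. In such a
graph on `n` vertices, the closed neighborhoods of the vertices of a maximum independent set cover
all vertices and have at most two elements each, so this set, which misses red, has size at least
`n / 2`. For the upper bound, embed the vertices in a grid with `⌈n / 2⌉` rows and two columns, and
color an edge red inside a row, blue inside a column and yellow otherwise. A set missing one of
these colors is mapped injectively by one of the two coordinates, so it has at most
`max ⌈n / 2⌉ 2 = ⌈n / 2⌉` elements.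
-/

open Finset

theorem card_le_fintypeCard_of_injOn {α β : Type*} [Fintype β] {f : α → β} {s : Finset α}
    (hf : Set.InjOn f s) : #s ≤ Fintype.card β := by
  classical
  exact (card_image_of_injOn hf).symm.trans_le (card_le_univ _)

theorem forall_eq_or_forall_eq_of_pairwise {ι α β : Type*} {f : ι → α} {g : ι → β} {s : Set ι}
    (h : ∀ i ∈ s, ∀ j ∈ s, f i = f j ∨ g i = g j) :
    (∀ i ∈ s, ∀ j ∈ s, f i = f j) ∨ (∀ i ∈ s, ∀ j ∈ s, g i = g j) := by
  by_contra! ⟨⟨i, hi, j, hj, hf⟩, k, hk, l, hl, hg⟩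
  have hij : g i = g j := (h i hi j hj).resolve_left hf
  have eq_of_mem : ∀ m ∈ s, g m = g i := by
    intro m hm
    by_contra hmi
    have hfi : f m = f i := (h m hm i hi).resolve_right hmi
    have hfj : f m = f j := (h m hm j hj).resolve_right (hij ▸ hmi)
    exact hf (hfi.symm.trans hfj)
  exact hg ((eq_of_mem k hk).trans (eq_of_mem l hl).symm)

theorem exists_triple_eq_two_same_iff {α : Type*} {p q s a : α} :
    (∃ x, ({p, q, s} : Multiset α) = {a, a, x}) ↔
      (p = a ∧ q = a) ∨ (q = a ∧ s = a) ∨ (p = a ∧ s = a) := by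
  classical
  constructor
  · rintro ⟨x, hx⟩
    have hcount : 2 ≤ Multiset.count a {p, q, s} := by
      rw [hx]
      simp [Multiset.insert_eq_cons]
    simp only [Multiset.insert_eq_cons, Multiset.count_cons, Multiset.count_singleton] at hcount
    grind
  · rintro (⟨rfl, rfl⟩ | ⟨rfl, rfl⟩ | ⟨rfl, rfl⟩)
    · exact ⟨s, rfl⟩
    · exact ⟨p, (Multiset.cons_swap p _ _).trans (congrArg _ (Multiset.pair_comm p _))⟩
    · exact ⟨q, congrArg _ (Multiset.pair_comm q _)⟩

section IndepNum

variable {V : Type*} {G : SimpleGraph V}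

theorem exists_adj_of_isMaximumIndepSet [Finite V] {s : Finset V} (hs : G.IsMaximumIndepSet s)
    {v : V} (hv : v ∉ s) : ∃ u ∈ s, G.Adj u v := by
  classical
  by_contra! h
  have hinsert : G.IsIndepSet (insert v s : Finset V) := by
    rw [coe_insert]
    exact hs.isIndepSet.insert fun u hu _ ↦ ⟨fun huv ↦ h u hu huv.symm, h u hu⟩
  have hcard := hs.maximum _ hinsert
  rw [card_insert_of_notMem hv] at hcard
  lia

theorem card_le_indepNum_mul_of_degree_le [Fintype V] [DecidableRel G.Adj] {d : ℕ}
    (hd : ∀ v, G.degree v ≤ d) : Fintype.card V ≤ G.indepNum * (d + 1) := by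
  classical
  obtain ⟨s, hs⟩ := G.maximumIndepSet_exists
  have hcover : univ ⊆ s.biUnion fun u ↦ insert u (G.neighborFinset u) := by
    intro v _
    by_cases hv : v ∈ s
    · exact mem_biUnion.2 ⟨v, hv, mem_insert_self _ _⟩
    · obtain ⟨u, hu, huv⟩ := exists_adj_of_isMaximumIndepSet hs hv
      exact mem_biUnion.2 ⟨u, hu, mem_insert_of_mem ((G.mem_neighborFinset u v).2 huv)⟩
  calc Fintype.card V ≤ #(s.biUnion fun u ↦ insert u (G.neighborFinset u)) := card_le_card hcover
    _ ≤ #s * (d + 1) := card_biUnion_le_card_mul _ _ _ fun u _ ↦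
      (card_insert_le _ _).trans (Nat.succ_le_succ (hd u))
    _ = G.indepNum * (d + 1) := by rw [G.maximumIndepSet_card_eq_indepNum s hs]

end IndepNum

section ColorGraph

variable {n : ℕ} {c : Coloring n} {S : Finset (Fin n)}

/-- The graph formed by the edges of color `a`. The values of `c.col` on the diagonal, which are
unconstrained, are ignored. -/
def Coloring.graph (c : Coloring n) (a : Col) : SimpleGraph (Fin n) where
  Adj i j := i ≠ j ∧ c.col i j = a
  symm := ⟨fun i j h ↦ ⟨h.1.symm, (c.symm j i).trans h.2⟩⟩
  loopless := ⟨fun _ h ↦ h.1 rfl⟩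

namespace Coloring

instance (c : Coloring n) (a : Col) : DecidableRel (c.graph a).Adj :=
  fun i j ↦ inferInstanceAs (Decidable (i ≠ j ∧ c.col i j = a))

theorem graph_adj {a : Col} {i j : Fin n} : (c.graph a).Adj i j ↔ i ≠ j ∧ c.col i j = a :=
  Iff.rfl

end Coloring

theorem twoColored_iff_exists_isIndepSet :
    TwoColored c S ↔ ∃ a, (c.graph a).IsIndepSet S := by
  refine exists_congr fun a ↦ ⟨fun h i hi j hj hij hadj ↦ h i hi j hj hij hadj.2, ?_⟩
  exact fun h i hi j hj hij hcol ↦ h hi hj hij ⟨hij, hcol⟩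

theorem TwoColored.card_le_h2 (hS : TwoColored c S) : #S ≤ h2 c := by
  refine le_csSup ⟨n, ?_⟩ ⟨S, hS, rfl⟩
  rintro _ ⟨T, -, rfl⟩
  exact T.card_le_univ.trans_eq (Fintype.card_fin n)

theorem h2_le {k : ℕ} (h : ∀ S, TwoColored c S → #S ≤ k) : h2 c ≤ k := by
  refine csSup_le ⟨0, ∅, ⟨.r, by simp⟩, card_empty⟩ ?_
  rintro _ ⟨S, hS, rfl⟩
  exact h S hS

theorem indepNum_graph_le_h2 (c : Coloring n) (a : Col) : (c.graph a).indepNum ≤ h2 c := by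
  obtain ⟨S, hS⟩ := (c.graph a).exists_isNIndepSet_indepNum
  rw [← hS.card_eq]
  exact (twoColored_iff_exists_isIndepSet.2 ⟨a, hS.isIndepSet⟩).card_le_h2

theorem h2n_eq_of_forall_le {H : Set (Multiset Col)} {k : ℕ} (hc : Avoids c H) (hck : h2 c ≤ k)
    (hk : ∀ c' : Coloring n, Avoids c' H → k ≤ h2 c') : h2n n H = k := by
  refine IsLeast.csInf_eq ⟨⟨c, hc, hck.antisymm (hk c hc)⟩, ?_⟩
  rintro _ ⟨c', hc', rfl⟩
  exact hk c' hc'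

theorem one_lt_degree_graph_iff {a : Col} {v : Fin n} :
    1 < (c.graph a).degree v ↔
      ∃ u w, (v ≠ u ∧ c.col v u = a) ∧ (v ≠ w ∧ c.col v w = a) ∧ u ≠ w := by
  simp only [← SimpleGraph.card_neighborFinset_eq_degree, one_lt_card_iff,
    SimpleGraph.mem_neighborFinset, Coloring.graph_adj]

theorem exists_contains_two_same_iff_one_lt_degree {a : Col} :
    (∃ x, Contains c {a, a, x}) ↔ ∃ v, 1 < (c.graph a).degree v := by
  simp only [one_lt_degree_graph_iff]
  constructor
  · rintro ⟨x, u, v, w, huv, hvw, huw, h⟩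
    rcases exists_triple_eq_two_same_iff.1 ⟨x, h⟩ with ⟨hu, hw⟩ | ⟨hv, hu⟩ | ⟨hv, hw⟩
    · exact ⟨v, u, w, ⟨huv.symm, (c.symm v u).trans hu⟩, ⟨hvw, hw⟩, huw⟩
    · exact ⟨w, u, v, ⟨huw.symm, (c.symm w u).trans hu⟩, ⟨hvw.symm, (c.symm w v).trans hv⟩, huv⟩
    · exact ⟨u, v, w, ⟨huv, hv⟩, ⟨huw, hw⟩, hvw⟩
  · rintro ⟨v, u, w, ⟨hvu, hu⟩, ⟨hvw, hw⟩, huw⟩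
    obtain ⟨x, hx⟩ : ∃ x, triPattern c u v w = {a, a, x} :=
      exists_triple_eq_two_same_iff.2 (.inl ⟨(c.symm u v).trans hu, hw⟩)
    exact ⟨x, u, v, w, hvu.symm, hvw, huw, hx⟩

theorem avoids_iff_degree_graph_r_le_one :
    Avoids c {Prrr, Prrb, Prry} ↔ ∀ v, (c.graph .r).degree v ≤ 1 := by
  have hforall : Avoids c {Prrr, Prrb, Prry} ↔ ∀ x, ¬ Contains c {.r, .r, x} := by
    simp only [Avoids, Set.forall_mem_insert, Set.mem_singleton_iff, forall_eq]
    exact ⟨fun ⟨hr, hb, hy⟩ x ↦ x.casesOn hr hb hy, fun h ↦ ⟨h .r, h .b, h .y⟩⟩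
  rw [hforall, ← not_exists, exists_contains_two_same_iff_one_lt_degree]
  simp only [not_exists, not_lt]

end ColorGraph

section GridColoring

variable {n : ℕ} {α β : Type*} [DecidableEq α] [DecidableEq β]

/-- The coloring obtained by placing the vertices in the grid `α × β`: edges inside a row
`{a} × β` are red, edges inside a column `α × {b}` are blue, all others are yellow. With
`⌈n / 2⌉` rows and two columns, this is the extremal coloring. -/
def gridColoring (e : Fin n ↪ α × β) : Coloring n where
  col i j := if (e i).1 = (e j).1 then .r else if (e i).2 = (e j).2 then .b else .y
  symm i j := by simp only [eq_comm]

theorem degree_graph_r_gridColoring_lt [Fintype β] (e : Fin n ↪ α × β) (v : Fin n) :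
    ((gridColoring e).graph .r).degree v < Fintype.card β := by
  let N := ((gridColoring e).graph .r).neighborFinset v
  have row_eq : ∀ i ∈ insert v N, (e i).1 = (e v).1 := by
    intro i hi
    rcases mem_insert.1 hi with rfl | hi
    · rfl
    · have hred : (gridColoring e).col v i = .r := ((SimpleGraph.mem_neighborFinset ..).1 hi).2
      simp only [gridColoring] at hred
      grind
  have hinj : Set.InjOn (fun i ↦ (e i).2) (insert v N : Finset (Fin n)) := fun i hi j hj hij ↦
    e.injective (Prod.ext ((row_eq i hi).trans (row_eq j hj).symm) hij)
  have hv : v ∉ N := by simp [N]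
  calc ((gridColoring e).graph .r).degree v < #(insert v N) := by
        rw [card_insert_of_notMem hv]; exact Nat.lt_succ_self _
    _ ≤ Fintype.card β := card_le_fintypeCard_of_injOn hinj

theorem TwoColored.injOn_fst_or_injOn_snd {e : Fin n ↪ α × β} {S : Finset (Fin n)}
    (hS : TwoColored (gridColoring e) S) :
    Set.InjOn (fun i ↦ (e i).1) S ∨ Set.InjOn (fun i ↦ (e i).2) S := by
  have eq_of_coords {i j : Fin n} (h₁ : (e i).1 = (e j).1) (h₂ : (e i).2 = (e j).2) : i = j :=
    e.injective (Prod.ext h₁ h₂)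
  obtain ⟨a, ha⟩ := hS
  simp only [gridColoring] at ha
  cases a with
  | r =>
    refine .inl fun i hi j hj hij ↦ ?_
    by_contra hne
    exact ha i hi j hj hne (if_pos hij)
  | b =>
    refine .inr fun i hi j hj hij ↦ ?_
    by_contra hne
    have hrow : (e i).1 ≠ (e j).1 := fun hrow ↦ hne (eq_of_coords hrow hij)
    exact ha i hi j hj hne ((if_neg hrow).trans (if_pos hij))
  | y =>
    have collinear : ∀ i ∈ S, ∀ j ∈ S, (e i).1 = (e j).1 ∨ (e i).2 = (e j).2 := by grind
    rcases forall_eq_or_forall_eq_of_pairwise collinear with hrow | hcol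
    · exact .inr fun i hi j hj ↦ eq_of_coords (hrow i hi j hj)
    · exact .inl fun i hi j hj hij ↦ eq_of_coords hij (hcol i hi j hj)

theorem h2_gridColoring_le [Fintype α] [Fintype β] (e : Fin n ↪ α × β) :
    h2 (gridColoring e) ≤ max (Fintype.card α) (Fintype.card β) :=
  h2_le fun _ hS ↦ le_max_iff.2 <|
    hS.injOn_fst_or_injOn_snd.imp card_le_fintypeCard_of_injOn card_le_fintypeCard_of_injOn

end GridColoring

theorem stmt14 (n : ℕ) (hn : 3 ≤ n) :
    h2n n {Prrr, Prrb, Prry} = (n + 1) / 2 := by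
  obtain ⟨e⟩ : Nonempty (Fin n ↪ Fin ((n + 1) / 2) × Fin 2) :=
    Function.Embedding.nonempty_of_card_le <| by
      simp only [Fintype.card_prod, Fintype.card_fin]
      lia
  refine h2n_eq_of_forall_le (c := gridColoring e) ?_ ?_ fun c hc ↦ ?_
  · refine avoids_iff_degree_graph_r_le_one.2 fun v ↦ Nat.le_of_lt_succ ?_
    simpa using degree_graph_r_gridColoring_lt e v
  · calc h2 (gridColoring e) ≤ max ((n + 1) / 2) 2 := by simpa using h2_gridColoring_le e
      _ = (n + 1) / 2 := max_eq_left (by lia)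
  · have hcard : n ≤ (c.graph .r).indepNum * 2 := by
      simpa using card_le_indepNum_mul_of_degree_le (avoids_iff_degree_graph_r_le_one.1 hc)
    have hindep := indepNum_graph_le_h2 c .r
    lia
end

section
/- Let H = {rrr, bbr, yyb} (the patterns: a monochromatic red triangle, a triangle with two blue edges and one red edge, and a triangle with two yellow edges and one blue edge). Then for every integer n ≥ 7, h_2(n, H) = ⌈3n/7⌉ + ε1(n), where ε1(n) = 1 if n ≡ 2 (mod 7) and ε1(n) = 0 otherwise. -/
/-!
A blue triangle forces the red edges to form a bipartite graph: a vertex with a red neighbour in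
the triangle has at least two, any other vertex has at least two blue neighbours there, so a red
edge inside either class would complete `rrr` or `bbr`. If there is no blue triangle and the blue
graph is not bipartite either, a shortest odd blue cycle is induced. Its chords of length two are
yellow and those of length three are red, and following the chords from one vertex around the cycle
leaves `7` as the only possible length, so that it spans a circulant coloring of `K₇`. Every other
vertex attaches to this `K₇` like one of its seven vertices, which makes the whole coloring a
blow-up.

A bipartite color class yields a two-colored set of size `⌈n / 2⌉`. In a blow-up any three
consecutive classes on the blue cycle span no red edge, and classes `i`, `i + 2`, `i + 4` span no
blue edge. Averaging the first triples gives `⌈3n / 7⌉`. If `n = 7q + 2` and no triple of either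
kind exceeds `3q + 1`, then all classes have size `q` except two of size `q + 1`; the first triples
put these two at distance three and the second triples put them at distance one. Nearly equal
classes, the larger ones consecutive along the red cycle, attain the bound.
-/

open Finset

variable {n : ℕ}

instance : Fintype Col := ⟨{.r, .b, .y}, by rintro (_ | _ | _) <;> decide⟩

/-- The family of the three excluded patterns. -/
abbrev forbidden : Set (Multiset Col) := {Prrr, Pbbr, Pyyb}

/-- A triangle may carry the colors `u`, `v`, `w`. -/
def Allowed (u v w : Col) : Prop := ({u, v, w} : Multiset Col) ∉ forbidden

instance (u v w : Col) : Decidable (Allowed u v w) := by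
  unfold Allowed; infer_instance

theorem avoids_iff {c : Coloring n} {H : Set (Multiset Col)} :
    Avoids c H ↔ ∀ u v w, u ≠ v → v ≠ w → u ≠ w → triPattern c u v w ∉ H :=
  ⟨fun h u v w huv hvw huw hH ↦ h _ hH ⟨u, v, w, huv, hvw, huw, rfl⟩,
    fun h _ hP ⟨u, v, w, huv, hvw, huw, hpat⟩ ↦ h u v w huv hvw huw (hpat ▸ hP)⟩

theorem Avoids.allowed {c : Coloring n} (hc : Avoids c forbidden) {u v w : Fin n}
    (huv : u ≠ v) (hvw : v ≠ w) (huw : u ≠ w) :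
    Allowed (c.col u v) (c.col v w) (c.col u w) :=
  avoids_iff.1 hc u v w huv hvw huw

namespace Coloring

/-- The graph formed by the edges of color `x`. -/
def colorGraph (c : Coloring n) (x : Col) : SimpleGraph (Fin n) where
  Adj u v := u ≠ v ∧ c.col u v = x
  symm := ⟨fun u v h ↦ ⟨h.1.symm, c.symm v u ▸ h.2⟩⟩
  loopless := ⟨fun _ h ↦ h.1 rfl⟩

theorem card_le_h2 {c : Coloring n} {S : Finset (Fin n)} (hS : TwoColored c S) :
    #S ≤ h2 c :=
  le_csSup ⟨n, by rintro _ ⟨T, -, rfl⟩; exact card_finset_fin_le T⟩ ⟨S, hS, rfl⟩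

theorem h2_le {c : Coloring n} {m : ℕ} (h : ∀ S, TwoColored c S → #S ≤ m) : h2 c ≤ m :=
  csSup_le ⟨0, ∅, ⟨.r, by simp⟩, rfl⟩ (by rintro _ ⟨S, hS, rfl⟩; exact h S hS)

theorem le_mul_h2_of_colorable {c : Coloring n} {x : Col} {k : ℕ}
    (h : (c.colorGraph x).Colorable k) : n ≤ k * h2 c := by
  obtain ⟨C⟩ := h
  have hclass : ∀ a ∈ (univ : Finset (Fin k)), #{v | C v = a} ≤ h2 c := fun a _ ↦
    card_le_h2 ⟨x, fun u hu v hv huv hcol ↦ C.valid (v := u) (w := v) ⟨huv, hcol⟩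
      ((mem_filter.1 hu).2.trans (mem_filter.1 hv).2.symm)⟩
  have h := card_le_mul_card_image_of_maps_to (fun v _ ↦ mem_univ (C v)) (h2 c) hclass
  rwa [card_univ, card_univ, Fintype.card_fin, Fintype.card_fin, mul_comm] at h

end Coloring

theorem exists_mem_and_of_card_filter_not_le_one {α : Type*} {T : Finset α} (hT : 2 < #T)
    {P Q : α → Prop} [DecidablePred P] [DecidablePred Q]
    (hP : #{t ∈ T | ¬ P t} ≤ 1) (hQ : #{t ∈ T | ¬ Q t} ≤ 1) :
    ∃ t ∈ T, P t ∧ Q t := by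
  classical
  by_contra! h
  have hcover : T ⊆ {t ∈ T | ¬ P t} ∪ {t ∈ T | ¬ Q t} := fun t ht ↦ by
    simp only [mem_union, mem_filter]
    by_cases hPt : P t
    exacts [.inr ⟨ht, h t ht hPt⟩, .inl ⟨ht, hPt⟩]
  have := (card_le_card hcover).trans (card_union_le _ _)
  omega

section BlueTriangle

variable {c : Coloring n} {T : Finset (Fin n)}

open Classical in
theorem card_not_red_le_one (hc : Avoids c forbidden) (hT : (c.colorGraph .b).IsClique T)
    {u : Fin n} (hu : ∃ t ∈ T, (c.colorGraph .r).Adj u t) :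
    #{t ∈ T | ¬ (c.colorGraph .r).Adj u t} ≤ 1 := by
  obtain ⟨z, hzT, huz, hz⟩ := hu
  have huT : u ∉ T := fun huT ↦ by simpa [hz] using (hT huT hzT huz).2
  have hne {t} (ht : t ∈ T) : u ≠ t := fun h ↦ huT (h ▸ ht)
  have hyellow : ∀ t ∈ T, ¬ (c.colorGraph .r).Adj u t → c.col u t = .y := fun t ht hr ↦ by
    have hr : c.col u t ≠ .r := fun h ↦ hr ⟨hne ht, h⟩
    have hzt : z ≠ t := fun h ↦ hr (h ▸ hz)
    have hall := hc.allowed huz hzt (hne ht)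
    rw [hz, (hT hzT ht hzt).2] at hall
    exact (by decide : ∀ z, Allowed .r .b z → z ≠ .r → z = .y) _ hall hr
  simp only [card_le_one, mem_filter]
  rintro s ⟨hs, hsr⟩ t ⟨ht, htr⟩
  by_contra hst
  have hall := hc.allowed (hne hs) hst (hne ht)
  rw [hyellow s hs hsr, hyellow t ht htr, (hT hs ht hst).2] at hall
  exact absurd hall (by decide)

open Classical in
theorem card_not_blue_le_one (hc : Avoids c forbidden) (hT : (c.colorGraph .b).IsClique T)
    {u : Fin n} (hu : ¬ ∃ t ∈ T, (c.colorGraph .r).Adj u t) :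
    #{t ∈ T | ¬ (c.colorGraph .b).Adj u t} ≤ 1 := by
  simp only [card_le_one, mem_filter]
  rintro s ⟨hs, hsb⟩ t ⟨ht, htb⟩
  by_contra hst
  have hus : u ≠ s := by rintro rfl; exact htb (hT hs ht hst)
  have hut : u ≠ t := by rintro rfl; exact hsb (hT ht hs (Ne.symm hst))
  have hyellow : ∀ t ∈ T, u ≠ t → ¬ (c.colorGraph .b).Adj u t → c.col u t = .y :=
    fun t ht hut hb ↦ by
      have hr : c.col u t ≠ .r := fun h ↦ hu ⟨t, ht, hut, h⟩
      have hb : c.col u t ≠ .b := fun h ↦ hb ⟨hut, h⟩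
      exact (by decide : ∀ z : Col, z ≠ .r → z ≠ .b → z = .y) _ hr hb
  have hall := hc.allowed hus hst hut
  rw [hyellow s hs hus hsb, hyellow t ht hut htb, (hT hs ht hst).2] at hall
  exact absurd hall (by decide)

theorem red_isBipartite_of_blue_triangle (hc : Avoids c forbidden)
    (hT : (c.colorGraph .b).IsNClique 3 T) : (c.colorGraph .r).IsBipartite := by
  classical
  have hcard : 2 < #T := by rw [hT.card_eq]; decide
  refine (SimpleGraph.Coloring.mk (fun u ↦ decide (∃ t ∈ T, (c.colorGraph .r).Adj u t))
    fun {u v} huv heq ↦ ?_).colorable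
  have hiff := decide_eq_decide.1 heq
  by_cases hu : ∃ t ∈ T, (c.colorGraph .r).Adj u t
  · obtain ⟨t, -, hut, hvt⟩ := exists_mem_and_of_card_filter_not_le_one hcard
      (card_not_red_le_one hc hT.isClique hu) (card_not_red_le_one hc hT.isClique (hiff.1 hu))
    have hall := hc.allowed huv.1 hvt.1 hut.1
    rw [huv.2, hvt.2, hut.2] at hall
    exact absurd hall (by decide)
  · obtain ⟨t, -, hut, hvt⟩ := exists_mem_and_of_card_filter_not_le_one hcard
      (card_not_blue_le_one hc hT.isClique hu)
      (card_not_blue_le_one hc hT.isClique (mt hiff.2 hu))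
    have hall := hc.allowed huv.1 hvt.1 hut.1
    rw [huv.2, hvt.2, hut.2] at hall
    exact absurd hall (by decide)

end BlueTriangle

section InducedOddCycle

variable {V : Type*} {G : SimpleGraph V}

/-- An induced cycle of length `m` in `G`, run through periodically by the sequence `f`. Indexing
by `ℕ` rather than `ZMod m` leaves the arithmetic of chord lengths to linear arithmetic. -/
structure IsInducedCycle (G : SimpleGraph V) (m : ℕ) (f : ℕ → V) : Prop where
  periodic : Function.Periodic f m
  adj : ∀ i, G.Adj (f i) (f (i + 1))
  ne : ∀ i k, 2 ≤ k → k + 2 ≤ m → f i ≠ f (i + k)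
  not_adj : ∀ i k, 2 ≤ k → k + 2 ≤ m → ¬ G.Adj (f i) (f (i + k))

theorem exists_periodic_adj_of_closed_walk {u : V} (w : G.Walk u u) (hw : 0 < w.length) :
    ∃ f : ℕ → V, Function.Periodic f w.length ∧ ∀ i, G.Adj (f i) (f (i + 1)) := by
  refine ⟨fun i ↦ w.getVert (i % w.length), fun i ↦ by simp, fun i ↦ ?_⟩
  have hlt : i % w.length < w.length := Nat.mod_lt i hw
  have hsucc : w.getVert ((i + 1) % w.length) = w.getVert (i % w.length + 1) := by
    rw [← Nat.mod_add_mod]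
    rcases (Nat.succ_le_of_lt hlt).lt_or_eq with h | h
    · rw [Nat.mod_eq_of_lt h]
    · rw [show i % w.length + 1 = w.length from h]
      simp
  simpa only [hsucc] using w.adj_getVert_succ hlt

theorem exists_walk_length_eq {f : ℕ → V} (hf : ∀ i, G.Adj (f i) (f (i + 1))) (i k : ℕ) :
    ∃ p : G.Walk (f i) (f (i + k)), p.length = k := by
  induction k with
  | zero => exact ⟨.nil, rfl⟩
  | succ k ih =>
    obtain ⟨p, hp⟩ := ih
    exact ⟨p.concat (hf (i + k)), by rw [SimpleGraph.Walk.length_concat, hp]⟩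

theorem two_le_length_of_minimal_odd {m : ℕ}
    (hmin : ∀ (a : V) (w : G.Walk a a), Odd w.length → m ≤ w.length) {u v : V}
    (p : G.Walk u v) (q : G.Walk v u) (hodd : Odd (p.length + q.length))
    (hp : p.length + 2 ≤ m) (hq : q.length + 2 ≤ m) (r : G.Walk u v) : 2 ≤ r.length := by
  -- Exactly one of `p`, `q` closes up with `r` to an odd closed walk.
  rcases Nat.even_or_odd (r.length + q.length) with heven | h
  · have h : Odd (r.length + p.length) := by grind
    have := hmin _ (r.append p.reverse) (by simpa using h)
    simp only [SimpleGraph.Walk.length_append, SimpleGraph.Walk.length_reverse] at this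
    omega
  · have := hmin _ (r.append q) (by simpa using h)
    simp only [SimpleGraph.Walk.length_append] at this
    omega

theorem exists_isInducedCycle_of_not_isBipartite (hG : ¬ G.IsBipartite) :
    ∃ m f, Odd m ∧ IsInducedCycle G m f := by
  classical
  have hex : ∃ m, Odd m ∧ ∃ (u : V) (w : G.Walk u u), w.length = m := by
    contrapose! hG
    exact SimpleGraph.two_colorable_iff_forall_loop_even.2 fun u w ↦
      Nat.not_odd_iff_even.1 fun h ↦ hG _ h u w rfl
  obtain ⟨hodd, u, w, hw⟩ := Nat.find_spec hex
  set m := Nat.find hex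
  have hmin (a : V) (w : G.Walk a a) (h : Odd w.length) : m ≤ w.length :=
    Nat.find_min' hex ⟨h, a, w, rfl⟩
  obtain ⟨f, hper, hadj⟩ := exists_periodic_adj_of_closed_walk w (hw ▸ hodd.pos)
  rw [hw] at hper
  have hlong (i k : ℕ) (hk : 2 ≤ k) (hkm : k + 2 ≤ m) (r : G.Walk (f i) (f (i + k))) :
      2 ≤ r.length := by
    obtain ⟨p, hp⟩ := exists_walk_length_eq hadj i k
    obtain ⟨q, hq⟩ : ∃ q : G.Walk (f (i + k)) (f i), q.length = m - k := by
      have hclose : f (i + k + (m - k)) = f i := by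
        rw [← hper i]; congr 1; omega
      exact hclose ▸ exists_walk_length_eq hadj (i + k) (m - k)
    refine two_le_length_of_minimal_odd hmin p q ?_ (by omega) (by omega) r
    rwa [hp, hq, Nat.add_sub_cancel' (by omega)]
  refine ⟨m, f, hodd, hper, hadj, fun i k hk hkm h ↦ ?_, fun i k hk hkm h ↦ ?_⟩
  · simpa using hlong i k hk hkm (SimpleGraph.Walk.nil.copy rfl h)
  · simpa using hlong i k hk hkm h.toWalk

end InducedOddCycle

/-- The circulant coloring of `K₇`: edges at cyclic distance `1`, `2`, `3` are blue, yellow, red.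
The diagonal is yellow, the color that blow-ups use inside their classes. -/
def circ (i j : Fin 7) : Col := ![.y, .b, .y, .r, .r, .y, .b] (j - i)

theorem circ_symm (i j : Fin 7) : circ i j = circ j i := by
  decide +revert

theorem circ_self (i : Fin 7) : circ i i = .y := by
  decide +revert

theorem circ_add_left (a i j : Fin 7) : circ (a + i) (a + j) = circ i j := by
  rw [circ, add_sub_add_left_eq_sub, circ]

theorem allowed_circ (i j k : Fin 7) : Allowed (circ i j) (circ j k) (circ i k) := by
  decide +kernel +revert

/-- The vertices `g 0, …, g 6` span a copy of the circulant coloring of `K₇`. -/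
def IsCircCopy (c : Coloring n) (g : Fin 7 → Fin n) : Prop :=
  ∀ i j, i ≠ j → g i ≠ g j ∧ c.col (g i) (g j) = circ i j

namespace IsInducedCycle

variable {c : Coloring n} (hc : Avoids c forbidden) {m : ℕ} {f : ℕ → Fin n}
  (hf : IsInducedCycle (c.colorGraph .b) m f)

include hf

theorem col_succ (i : ℕ) : c.col (f i) (f (i + 1)) = .b :=
  (hf.adj i).2

theorem chord_ne_blue (i : ℕ) {k : ℕ} (hk : 2 ≤ k) (hkm : k + 2 ≤ m) :
    c.col (f i) (f (i + k)) ≠ .b :=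
  fun h ↦ hf.not_adj i k hk hkm ⟨hf.ne i k hk hkm, h⟩

theorem col_eq_col_complement (i : ℕ) {k l : ℕ} (hkl : k + l = m) :
    c.col (f i) (f (i + k)) = c.col (f (i + k)) (f (i + k + l)) := by
  rw [c.symm, add_assoc, hkl, hf.periodic i]

include hc

theorem col_add_two (i : ℕ) (hm : 4 ≤ m) : c.col (f i) (f (i + 2)) = .y := by
  have hall := hc.allowed (hf.adj i).1 (hf.adj (i + 1)).1 (hf.ne i 2 le_rfl hm)
  have hblue := chord_ne_blue hf i le_rfl hm
  rw [col_succ hf, col_succ hf (i + 1)] at hall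
  exact (by decide : ∀ z, Allowed .b .b z → z ≠ .b → z = .y) _ hall hblue

theorem allowed_chords_succ (i : ℕ) {k : ℕ} (hk : 2 ≤ k) (hkm : k + 3 ≤ m) :
    Allowed (c.col (f i) (f (i + k))) .b (c.col (f i) (f (i + (k + 1)))) := by
  have hall := hc.allowed (hf.ne i k hk (by omega)) (hf.adj (i + k)).1
    (hf.ne i (k + 1) (by omega) (by omega))
  rwa [col_succ hf] at hall

theorem chord_succ_red_of_yellow (i : ℕ) {k : ℕ} (hk : 2 ≤ k) (hkm : k + 3 ≤ m)
    (h : c.col (f i) (f (i + k)) = .y) : c.col (f i) (f (i + (k + 1))) = .r := by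
  have hall := allowed_chords_succ hc hf i hk hkm
  have hblue := chord_ne_blue hf i (show 2 ≤ k + 1 by omega) (by omega)
  rw [h] at hall
  exact (by decide : ∀ z, Allowed .y .b z → z ≠ .b → z = .r) _ hall hblue

theorem chord_red_of_succ_yellow (i : ℕ) {k : ℕ} (hk : 2 ≤ k) (hkm : k + 3 ≤ m)
    (h : c.col (f i) (f (i + (k + 1))) = .y) : c.col (f i) (f (i + k)) = .r := by
  have hall := allowed_chords_succ hc hf i hk hkm
  have hblue := chord_ne_blue hf i hk (by omega)
  rw [h] at hall
  exact (by decide : ∀ z, Allowed z .b .y → z ≠ .b → z = .r) _ hall hblue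

theorem col_add_three (i : ℕ) (hm : 5 ≤ m) : c.col (f i) (f (i + 3)) = .r :=
  chord_succ_red_of_yellow hc hf i le_rfl hm (col_add_two hc hf i (by omega))

theorem chord_add_three_yellow_of_red (i : ℕ) {k : ℕ} (hk : 2 ≤ k) (hkm : k + 5 ≤ m)
    (h : c.col (f i) (f (i + k)) = .r) : c.col (f i) (f (i + (k + 3))) = .y := by
  have hall := hc.allowed (hf.ne i k hk (by omega)) (hf.ne (i + k) 3 (by omega) (by omega))
    (hf.ne i (k + 3) (by omega) (by omega))
  have hblue := chord_ne_blue hf i (show 2 ≤ k + 3 by omega) (by omega)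
  rw [h, col_add_three hc hf (i + k) (by omega), add_assoc] at hall
  exact (by decide : ∀ z, Allowed .r .r z → z ≠ .b → z = .y) _ hall hblue

theorem even_chord_yellow (i t : ℕ) (ht : 2 * t + 8 ≤ m) :
    c.col (f i) (f (i + (2 * t + 6))) = .y := by
  induction t with
  | zero =>
    exact chord_add_three_yellow_of_red hc hf i (by omega) (by omega)
      (col_add_three hc hf i (by omega))
  | succ t ih =>
    have hred : c.col (f i) (f (i + (2 * t + 5))) = .r :=
      chord_red_of_succ_yellow hc hf i (by omega) (by omega) (ih (by omega))
    exact chord_add_three_yellow_of_red hc hf i (by omega) (by omega) hred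

theorem length_eq_seven (hodd : Odd m) (hm : 5 ≤ m) : m = 7 := by
  have hred (i : ℕ) : c.col (f i) (f (i + 3)) = .r := col_add_three hc hf i hm
  have hm5 : m ≠ 5 := fun h ↦ by
    have := hred 0
    rw [col_eq_col_complement hf 0 (l := 2) h.symm, col_add_two hc hf _ (by omega)] at this
    contradiction
  by_contra hm7
  obtain ⟨t, rfl⟩ : ∃ t, m = 2 * t + 9 := by
    obtain ⟨k, rfl⟩ := hodd
    exact ⟨k - 4, by omega⟩
  have hyellow := even_chord_yellow hc hf 0 t (by omega)
  rw [col_eq_col_complement hf 0 (l := 3) rfl, hred] at hyellow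
  contradiction

end IsInducedCycle

theorem forall_ne_of_forall_add {P : Fin 7 → Fin 7 → Prop} (hsymm : ∀ i j, P i j → P j i)
    (h1 : ∀ i, P i (i + 1)) (h2 : ∀ i, P i (i + 2)) (h3 : ∀ i, P i (i + 3)) {i j : Fin 7}
    (hij : i ≠ j) : P i j := by
  have hdist : ∀ i j : Fin 7, i ≠ j → (j = i + 1 ∨ j = i + 2 ∨ j = i + 3) ∨
      (i = j + 1 ∨ i = j + 2 ∨ i = j + 3) := by decide
  rcases hdist i j hij with (h | h | h) | (h | h | h) <;> rw [h]
  exacts [h1 i, h2 i, h3 i, hsymm _ _ (h1 j), hsymm _ _ (h2 j), hsymm _ _ (h3 j)]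

theorem IsInducedCycle.isCircCopy {c : Coloring n} (hc : Avoids c forbidden) {f : ℕ → Fin n}
    (hf : IsInducedCycle (c.colorGraph .b) 7 f) : IsCircCopy c (fun i ↦ f i) := by
  have hadd (i k : Fin 7) : f ↑(i + k) = f (i + k) := by
    rw [Fin.val_add, hf.periodic.map_mod_nat]
  have hcirc (k i : Fin 7) : circ i (i + k) = circ 0 k := by
    simpa using circ_add_left i 0 k
  refine fun i j ↦ forall_ne_of_forall_add
    (P := fun i j : Fin 7 ↦ f i ≠ f j ∧ c.col (f i) (f j) = circ i j)
    (fun i j h ↦ ⟨h.1.symm, by rw [c.symm, circ_symm, h.2]⟩) ?_ ?_ ?_ <;> intro i <;>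
    rw [hadd, hcirc]
  · exact ⟨(hf.adj i).1, col_succ hf i⟩
  · exact ⟨hf.ne i 2 (by decide) (by decide), col_add_two hc hf i (by decide)⟩
  · exact ⟨hf.ne i 3 (by decide) (by decide), col_add_three hc hf i (by decide)⟩

theorem exists_isCircCopy {c : Coloring n} (hc : Avoids c forbidden)
    (hfree : (c.colorGraph .b).CliqueFree 3) (hodd : ¬ (c.colorGraph .b).IsBipartite) :
    ∃ g, IsCircCopy c g := by
  obtain ⟨m, f, hm, hf⟩ := exists_isInducedCycle_of_not_isBipartite hodd
  have hm1 : m ≠ 1 := by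
    rintro rfl
    exact (hf.adj 0).ne (hf.periodic 0).symm
  have hm3 : m ≠ 3 := by
    rintro rfl
    have hadj : (c.colorGraph .b).Adj (f 2) (f 0) := hf.periodic 0 ▸ hf.adj 2
    exact hfree {f 0, f 1, f 2}
      (SimpleGraph.is3Clique_triple_iff.2 ⟨hf.adj 0, hadj.symm, hf.adj 1⟩)
  obtain rfl : m = 7 := hf.length_eq_seven hc hm (by obtain ⟨k, rfl⟩ := hm; omega)
  exact ⟨_, hf.isCircCopy hc⟩

/-- The colors `x i` of the edges from an extra vertex to the vertices `i` of `circ` create no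
forbidden triangle. -/
def IsAttachment (x : Fin 7 → Col) : Prop :=
  ∀ i j, i ≠ j → Allowed (x i) (circ i j) (x j)

namespace IsAttachment

variable {x : Fin 7 → Col}

theorem translate (hx : IsAttachment x) (a : Fin 7) : IsAttachment (fun j ↦ x (a + j)) :=
  fun i j hij ↦ circ_add_left a i j ▸ hx (a + i) (a + j) (by simpa using hij)

theorem blue_step (hx : IsAttachment x) (i : Fin 7) : Allowed (x i) .b (x (i + 1)) := by
  have hblue : circ i (i + 1) = .b := by decide +revert
  exact hblue ▸ hx i (i + 1) (by simp)

theorem yellow_step (hx : IsAttachment x) (i : Fin 7) : Allowed (x i) .y (x (i + 2)) := by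
  have hyellow : circ i (i + 2) = .y := by decide +revert
  exact hyellow ▸ hx i (i + 2) (by simp)

theorem red_step (hx : IsAttachment x) (i : Fin 7) : Allowed (x i) .r (x (i + 3)) := by
  have hred : circ i (i + 3) = .r := by decide +revert
  exact hred ▸ hx i (i + 3) (by simp)

theorem not_blue_blue (hx : IsAttachment x) (i : Fin 7) (h0 : x i = .b) :
    x (i + 1) ≠ .b := fun h1 ↦ by
  have hnext (j : Fin 7) (hj : x j = .b) (hj1 : x (j + 1) = .b) : x (j + 2) = .b := by
    have hblue := hx.blue_step (j + 1)
    have hyellow := hx.yellow_step j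
    simp only [hj1, add_assoc, Fin.reduceAdd] at hblue
    rw [hj] at hyellow
    exact (by decide : ∀ z, Allowed .b .b z → Allowed .b .y z → z = .b) _ hblue hyellow
  have h2 := hnext i h0 h1
  have h3 := hnext (i + 1) h1 (by rwa [add_assoc])
  have hred := hx.red_step i
  simp only [add_assoc, Fin.reduceAdd] at h3
  rw [h0, h3] at hred
  exact absurd hred (by decide)

theorem exists_red_red (hx : IsAttachment x) : ∃ i, x i = .r ∧ x (i + 1) = .r := by
  by_contra! hno
  have halt (i : Fin 7) : x i = .y ↔ x (i + 1) ≠ .y := by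
    have hstep : ∀ u v, Allowed u .b v → (u = .r → v ≠ .r) → (u = .b → v ≠ .b) →
        (u = .y ↔ v ≠ .y) := by decide
    exact hstep _ _ (hx.blue_step i) (hno i) (hx.not_blue_blue i)
  -- Yellow cannot alternate around a cycle of length `7`.
  have h0 := halt 0
  have h1 := halt 1
  have h2 := halt 2
  have h3 := halt 3
  have h4 := halt 4
  have h5 := halt 5
  have h6 := halt 6
  simp only [Fin.reduceAdd] at h0 h1 h2 h3 h4 h5 h6
  tauto

theorem allowed_of_eq (hx : IsAttachment x) {i j : Fin 7} {u : Col} (hi : x i = u)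
    (hij : i ≠ j := by decide) : Allowed u (circ i j) (x j) :=
  hi ▸ hx i j hij

theorem apply_four (hx : IsAttachment x) (h0 : x 0 = .r) (h1 : x 1 = .r) : x 4 = .y := by
  have hyellow : ∀ x₂ x₄ x₆, Allowed .r .b x₂ → Allowed .r .r x₄ → Allowed .r .b x₆ →
      Allowed x₂ .y x₄ → Allowed x₂ .r x₆ → Allowed x₄ .y x₆ → x₄ = .y := by decide
  exact hyellow (x 2) (x 4) (x 6) (hx.allowed_of_eq h1) (hx.allowed_of_eq h0)
    (hx.allowed_of_eq h0) (hx 2 4 (by decide)) (hx 2 6 (by decide)) (hx 4 6 (by decide))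

theorem eq_circ_four (hx : IsAttachment x) (h0 : x 0 = .r) (h1 : x 1 = .r) :
    x = circ 4 := by
  have hblue : ∀ z, Allowed .r .r z → Allowed .y .b z → z = .b := by decide
  have hyellow : ∀ z, Allowed .r .b z → Allowed .b .b z → z = .y := by decide
  have h4 := hx.apply_four h0 h1
  have h3 := hblue (x 3) (hx.allowed_of_eq h0) (hx.allowed_of_eq h4)
  have h5 := hblue (x 5) (hx.allowed_of_eq h1) (hx.allowed_of_eq h4)
  have h2 := hyellow (x 2) (hx.allowed_of_eq h1) (hx.allowed_of_eq h3)
  have h6 := hyellow (x 6) (hx.allowed_of_eq h0) (hx.allowed_of_eq h5)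
  funext j
  fin_cases j
  exacts [h0, h1, h2, h3, h4, h5, h6]

theorem exists_eq_circ (hx : IsAttachment x) : ∃ i, x = circ i := by
  obtain ⟨a, h0, h1⟩ := hx.exists_red_red
  refine ⟨a + 4, funext fun j ↦ ?_⟩
  have h := congrFun ((hx.translate a).eq_circ_four (by simpa using h0) h1) (j - a)
  rwa [← circ_add_left a, add_sub_cancel] at h

end IsAttachment

theorem eq_circ_of_forall_allowed (i j : Fin 7) (x : Col)
    (h : ∀ k, k ≠ i → k ≠ j → Allowed x (circ j k) (circ i k)) : x = circ i j := by
  decide +kernel +revert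

/-- The coloring `c` is a blow-up of `circ` with classes the fibers of `p`, which may be empty. -/
def IsBlowup (c : Coloring n) (p : Fin n → Fin 7) : Prop :=
  ∀ u v, u ≠ v → c.col u v = circ (p u) (p v)

theorem exists_forall_col_eq_circ {c : Coloring n} (hc : Avoids c forbidden)
    {g : Fin 7 → Fin n} (hg : IsCircCopy c g) (v : Fin n) :
    ∃ i, ∀ k, k ≠ i → v ≠ g k ∧ c.col v (g k) = circ i k := by
  by_cases hv : ∃ i, v = g i
  · obtain ⟨i, rfl⟩ := hv
    exact ⟨i, fun k hk ↦ hg i k hk.symm⟩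
  · push Not at hv
    have hx : IsAttachment (fun j ↦ c.col v (g j)) := fun i j hij ↦ by
      have hall := hc.allowed (hv i) (hg i j hij).1 (hv j)
      rwa [(hg i j hij).2] at hall
    obtain ⟨i, hi⟩ := hx.exists_eq_circ
    exact ⟨i, fun k _ ↦ ⟨hv k, congrFun hi k⟩⟩

theorem exists_isBlowup {c : Coloring n} (hc : Avoids c forbidden) {g : Fin 7 → Fin n}
    (hg : IsCircCopy c g) : ∃ p, IsBlowup c p := by
  choose p hp using exists_forall_col_eq_circ hc hg
  refine ⟨p, fun u v huv ↦ eq_circ_of_forall_allowed _ _ _ fun k hku hkv ↦ ?_⟩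
  obtain ⟨hu, huk⟩ := hp u k hku
  obtain ⟨hv, hvk⟩ := hp v k hkv
  have hall := hc.allowed huv hv hu
  rwa [huk, hvk] at hall

theorem isBipartite_or_isBipartite_or_isBlowup {c : Coloring n} (hc : Avoids c forbidden) :
    (c.colorGraph .r).IsBipartite ∨ (c.colorGraph .b).IsBipartite ∨ ∃ p, IsBlowup c p := by
  by_cases hfree : (c.colorGraph .b).CliqueFree 3
  · by_cases hb : (c.colorGraph .b).IsBipartite
    · exact .inr (.inl hb)
    · obtain ⟨g, hg⟩ := exists_isCircCopy hc hfree hb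
      exact .inr (.inr (exists_isBlowup hc hg))
  · simp only [SimpleGraph.CliqueFree, not_forall, not_not] at hfree
    obtain ⟨T, hT⟩ := hfree
    exact .inl (red_isBipartite_of_blue_triangle hc hT)

/-- The value `⌈3n/7⌉ + ε₁(n)` of `h2n` for the forbidden patterns. -/
def extremalValue (n : ℕ) : ℕ :=
  (3 * n + 6) / 7 + (if n % 7 = 2 then 1 else 0)

theorem exists_pos_iff_eq_of_sum_eq_one {ι : Type*} {s : Finset ι} {f : ι → ℕ}
    (hf : ∑ i ∈ s, f i = 1) : ∃ a, ∀ i ∈ s, 0 < f i ↔ i = a := by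
  classical
  obtain ⟨a, ha, hpos⟩ := exists_ne_zero_of_sum_ne_zero (hf ▸ one_ne_zero)
  refine ⟨a, fun i hi ↦ ⟨fun hfi ↦ by_contra fun hia ↦ ?_, fun h ↦ h ▸ Nat.pos_of_ne_zero hpos⟩⟩
  have : f i + f a ≤ 1 :=
    (sum_pair hia).symm.trans_le ((sum_le_sum_of_subset (by grind)).trans_eq hf)
  omega

section CyclicSums

variable {w : Fin 7 → ℕ} {h : ℕ}

theorem sum_cyclic_triples (w : Fin 7 → ℕ) :
    ∑ i, (w i + w (i + 1) + w (i + 2)) = 3 * ∑ i, w i := by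
  have hshift (k : Fin 7) : ∑ i, w (i + k) = ∑ i, w i := Equiv.sum_comp (Equiv.addRight k) w
  rw [sum_add_distrib, sum_add_distrib, hshift, hshift]
  ring

theorem exists_heavy_iff (hw : ∀ i, w i + w (i + 1) + w (i + 2) ≤ h)
    (hslack : 7 * h = 3 * ∑ i, w i + 1) :
    ∃ a, ∀ j, ∑ i, w i < w j + 2 * h ↔ j = a ∨ j = a + 3 := by
  choose f hf using fun i ↦ Nat.exists_eq_add_of_le (hw i)
  have hsum : ∑ i, f i = 1 := by
    have := sum_congr rfl fun i (_ : i ∈ univ) ↦ hf i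
    rw [sum_add_distrib, sum_cyclic_triples, sum_const, card_univ, Fintype.card_fin,
      smul_eq_mul] at this
    omega
  obtain ⟨a, ha⟩ := exists_pos_iff_eq_of_sum_eq_one hsum
  have hexcess (j : Fin 7) : w j + 2 * h = ∑ i, w i + f (j + 1) + f (j + 4) := by
    have hrot : ∑ i, w i = ∑ i, w (j + i) := (Equiv.sum_comp (Equiv.addLeft j) w).symm
    have h1 := hf (j + 1)
    have h4 := hf (j + 4)
    simp only [add_assoc, Fin.reduceAdd] at h1 h4
    rw [hrot, Fin.sum_univ_seven, add_zero]
    omega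
  refine ⟨a + 3, fun j ↦ ?_⟩
  rw [hexcess, add_assoc, Nat.lt_add_right_iff_pos, Nat.add_pos_iff_pos_or_pos, ha _ (mem_univ _),
    ha _ (mem_univ _)]
  exact (by decide : ∀ a j : Fin 7, j + 1 = a ∨ j + 4 = a ↔ j = a + 3 ∨ j = a + 3 + 3) a j

theorem three_mul_sum_le (hw : ∀ i, w i + w (i + 1) + w (i + 2) ≤ h) :
    3 * ∑ i, w i ≤ 7 * h := by
  simpa [sum_cyclic_triples] using sum_le_card_nsmul univ _ h fun i _ ↦ hw i

theorem seven_mul_ne (hred : ∀ i, w i + w (i + 1) + w (i + 2) ≤ h)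
    (hblue : ∀ i, w i + w (i + 2) + w (i + 4) ≤ h) : 7 * h ≠ 3 * ∑ i, w i + 1 := by
  intro hslack
  have hdouble : ∑ i, w (2 * i) = ∑ i, w i :=
    Function.Bijective.sum_comp (by decide) w
  obtain ⟨a, ha⟩ := exists_heavy_iff hred hslack
  obtain ⟨b, hb⟩ := exists_heavy_iff (w := fun i ↦ w (2 * i))
    (fun i ↦ by simpa only [mul_add, mul_one, Fin.reduceMul] using hblue (2 * i)) (hdouble ▸ hslack)
  have hab (j : Fin 7) : (2 * j = a ∨ 2 * j = a + 3) ↔ (j = b ∨ j = b + 3) := by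
    rw [← ha, ← hb, hdouble]
  exact (by decide : ∀ a b : Fin 7,
    ¬ ∀ j, 2 * j = a ∨ 2 * j = a + 3 ↔ j = b ∨ j = b + 3) a b hab

theorem extremalValue_sum_le (hred : ∀ i, w i + w (i + 1) + w (i + 2) ≤ h)
    (hblue : ∀ i, w i + w (i + 2) + w (i + 4) ≤ h) : extremalValue (∑ i, w i) ≤ h := by
  have := three_mul_sum_le hred
  have := seven_mul_ne hred hblue
  rw [extremalValue]
  split_ifs <;> omega

end CyclicSums

/-- The sets of three consecutive classes: the maximal sets of classes spanning no red edge. -/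
def redFree (i : Fin 7) : Finset (Fin 7) :=
  {i, i + 1, i + 2}

/-- The maximal sets of classes spanning no blue edge. -/
def blueFree (i : Fin 7) : Finset (Fin 7) :=
  {i, i + 2, i + 4}

theorem sum_redFree (w : Fin 7 → ℕ) (i : Fin 7) :
    ∑ j ∈ redFree i, w j = w i + w (i + 1) + w (i + 2) := by
  rw [redFree, sum_insert (by decide +revert), sum_pair (by decide +revert), add_assoc]

theorem sum_blueFree (w : Fin 7 → ℕ) (i : Fin 7) :
    ∑ j ∈ blueFree i, w j = w i + w (i + 2) + w (i + 4) := by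
  rw [blueFree, sum_insert (by decide +revert), sum_pair (by decide +revert), add_assoc]

theorem forall_circ_ne_red_iff {T : Finset (Fin 7)} :
    (∀ i ∈ T, ∀ j ∈ T, circ i j ≠ .r) ↔ ∃ i, T ⊆ redFree i := by
  decide +kernel +revert

theorem forall_circ_ne_blue_iff {T : Finset (Fin 7)} :
    (∀ i ∈ T, ∀ j ∈ T, circ i j ≠ .b) ↔ ∃ i, T ⊆ blueFree i := by
  decide +kernel +revert

theorem card_le_three_of_circ_ne_yellow {T : Finset (Fin 7)}
    (hT : ∀ i ∈ T, ∀ j ∈ T, i ≠ j → circ i j ≠ .y) : #T ≤ 3 := by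
  decide +kernel +revert

theorem card_le_sum_card_fiber {α β : Type*} [Fintype α] [DecidableEq β] {p : α → β}
    {S : Finset α} {T : Finset β} (h : S.image p ⊆ T) : #S ≤ ∑ i ∈ T, #{v | p v = i} := by
  rw [sum_card_fiberwise_eq_card_filter]
  exact card_le_card fun v hv ↦ mem_filter.2 ⟨mem_univ v, h (mem_image_of_mem p hv)⟩

namespace IsBlowup

variable {c : Coloring n} {p : Fin n → Fin 7}

theorem sum_card_fiber_le_h2 (hp : IsBlowup c p) {T : Finset (Fin 7)} {x : Col}
    (hT : ∀ i ∈ T, ∀ j ∈ T, circ i j ≠ x) : ∑ i ∈ T, #{v | p v = i} ≤ h2 c := by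
  rw [sum_card_fiberwise_eq_card_filter]
  exact Coloring.card_le_h2 ⟨x, fun u hu v hv huv ↦
    hp u v huv ▸ hT _ (mem_filter.1 hu).2 _ (mem_filter.1 hv).2⟩

theorem extremalValue_le_h2 (hp : IsBlowup c p) : extremalValue n ≤ h2 c := by
  have hn : ∑ i, #{v | p v = i} = n := by
    rw [sum_card_fiberwise_eq_card_filter]; simp
  have hred (i : Fin 7) := hp.sum_card_fiber_le_h2 (forall_circ_ne_red_iff.2 ⟨i, Subset.rfl⟩)
  have hblue (i : Fin 7) := hp.sum_card_fiber_le_h2 (forall_circ_ne_blue_iff.2 ⟨i, Subset.rfl⟩)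
  simp only [sum_redFree, sum_blueFree] at hred hblue
  simpa only [hn] using extremalValue_sum_le hred hblue

theorem avoids (hp : IsBlowup c p) : Avoids c forbidden :=
  avoids_iff.2 fun u v w huv hvw huw ↦ by
    rw [triPattern, hp u v huv, hp v w hvw, hp u w huw]
    exact allowed_circ _ _ _

theorem forall_image_circ_ne (hp : IsBlowup c p) {S : Finset (Fin n)} {x : Col} (hx : x ≠ .y)
    (hS : ∀ u ∈ S, ∀ v ∈ S, u ≠ v → c.col u v ≠ x) :
    ∀ i ∈ S.image p, ∀ j ∈ S.image p, circ i j ≠ x := by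
  simp only [forall_mem_image]
  intro u hu v hv
  rcases eq_or_ne u v with rfl | huv
  · rw [circ_self]; exact hx.symm
  · exact hp u v huv ▸ hS u hu v hv huv

theorem card_le_three_of_ne_yellow (hp : IsBlowup c p) {S : Finset (Fin n)}
    (hS : ∀ u ∈ S, ∀ v ∈ S, u ≠ v → c.col u v ≠ .y) : #S ≤ 3 := by
  have hinj : Set.InjOn p S := fun u hu v hv heq ↦ by
    by_contra huv
    exact hS u hu v hv huv (by rw [hp u v huv, heq, circ_self])
  rw [← card_image_of_injOn hinj]
  refine card_le_three_of_circ_ne_yellow ?_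
  simp only [forall_mem_image]
  intro u hu v hv hne
  have huv : u ≠ v := ne_of_apply_ne p hne
  exact hp u v huv ▸ hS u hu v hv huv

theorem h2_le (hp : IsBlowup c p) {m : ℕ} (hm : 3 ≤ m)
    (hred : ∀ i, ∑ j ∈ redFree i, #{v | p v = j} ≤ m)
    (hblue : ∀ i, ∑ j ∈ blueFree i, #{v | p v = j} ≤ m) : h2 c ≤ m := by
  refine Coloring.h2_le fun S ⟨x, hS⟩ ↦ ?_
  cases x with
  | r =>
    obtain ⟨i, hi⟩ := forall_circ_ne_red_iff.1 (hp.forall_image_circ_ne (by decide) hS)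
    exact (card_le_sum_card_fiber hi).trans (hred i)
  | b =>
    obtain ⟨i, hi⟩ := forall_circ_ne_blue_iff.1 (hp.forall_image_circ_ne (by decide) hS)
    exact (card_le_sum_card_fiber hi).trans (hblue i)
  | y => exact (hp.card_le_three_of_ne_yellow hS).trans hm

end IsBlowup

/-- The class of the vertex `v` in the extremal blow-up. The factor `3` puts classes of consecutive
residues at red distance, so that each red-free set contains few of the larger classes. -/
def extremalClass (n : ℕ) (v : Fin n) : Fin 7 :=
  3 * Fin.ofNat 7 v

/-- The blow-up of `circ` whose classes are the residue classes modulo `7`. -/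
def extremalColoring (n : ℕ) : Coloring n where
  col u v := circ (extremalClass n u) (extremalClass n v)
  symm _ _ := circ_symm _ _

theorem isBlowup_extremalColoring : IsBlowup (extremalColoring n) (extremalClass n) :=
  fun _ _ _ ↦ rfl

theorem card_extremalClass_eq (i : Fin 7) :
    #{v | extremalClass n v = i} = n / 7 + if (5 * i).val < n % 7 then 1 else 0 := by
  have hiff (v : Fin n) : extremalClass n v = i ↔ (v : ℕ) ≡ (5 * i).val [MOD 7] := by
    have hinv : ∀ a i : Fin 7, 3 * a = i ↔ a = 5 * i := by decide
    rw [extremalClass, hinv, Fin.ext_iff, Nat.ModEq, Nat.mod_eq_of_lt (5 * i).isLt, Fin.val_ofNat]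
  have h := Nat.count_modEq_card n (r := 7) (by decide) (5 * i).val
  rw [Nat.mod_eq_of_lt (5 * i).isLt, Nat.count_eq_card_filter_range] at h
  simp only [hiff]
  rw [← h, card_filter, card_filter]
  exact Fin.sum_univ_eq_sum_range (fun v ↦ if v ≡ (5 * i).val [MOD 7] then 1 else 0) n

theorem extremalValue_eq (n : ℕ) : extremalValue n = 3 * (n / 7) + extremalValue (n % 7) := by
  simp only [extremalValue, Nat.mod_mod]
  omega

theorem sum_card_extremalClass_le {T : Finset (Fin 7)} (hT : #T ≤ 3)
    (h : (∑ j ∈ T, if (5 * j).val < n % 7 then 1 else 0) ≤ extremalValue (n % 7)) :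
    ∑ j ∈ T, #{v | extremalClass n v = j} ≤ extremalValue n := by
  simp only [card_extremalClass_eq, sum_add_distrib, sum_const, smul_eq_mul]
  rw [extremalValue_eq]
  gcongr

theorem h2_extremalColoring_le (n : ℕ) :
    h2 (extremalColoring n) ≤ max 3 (extremalValue n) := by
  have hlarger : ∀ s < 7, ∀ i,
      (∑ j ∈ redFree i, if (5 * j).val < s then 1 else 0) ≤ extremalValue s ∧
      (∑ j ∈ blueFree i, if (5 * j).val < s then 1 else 0) ≤ extremalValue s := by
    decide
  have hmod := hlarger (n % 7) (Nat.mod_lt n (by decide))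
  exact isBlowup_extremalColoring.h2_le (le_max_left _ _)
    (fun i ↦ le_max_of_le_right (sum_card_extremalClass_le card_le_three (hmod i).1))
    (fun i ↦ le_max_of_le_right (sum_card_extremalClass_le card_le_three (hmod i).2))

theorem stmt16 (n : ℕ) (hn : 7 ≤ n) :
    h2n n {Prrr, Pbbr, Pyyb}
      = (3 * n + 6) / 7 + (if n % 7 = 2 then 1 else 0) := by
  change h2n n forbidden = extremalValue n
  refine le_antisymm ?_ ?_
  · have hupper := h2_extremalColoring_le n
    have hmin : h2n n forbidden ≤ h2 (extremalColoring n) :=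
      Nat.sInf_le ⟨_, isBlowup_extremalColoring.avoids, rfl⟩
    have hthree : 3 ≤ extremalValue n := by rw [extremalValue]; omega
    rw [max_eq_right hthree] at hupper
    exact hmin.trans hupper
  · refine le_csInf ⟨_, extremalColoring n, isBlowup_extremalColoring.avoids, rfl⟩ ?_
    rintro _ ⟨c, hc, rfl⟩
    have hhalf : n ≤ 2 * h2 c → extremalValue n ≤ h2 c := fun h ↦ by
      rw [extremalValue]; split_ifs <;> omega
    rcases isBipartite_or_isBipartite_or_isBlowup hc with hr | hb | ⟨p, hp⟩
    · exact hhalf (Coloring.le_mul_h2_of_colorable hr)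
    · exact hhalf (Coloring.le_mul_h2_of_colorable hb)
    · exact hp.extremalValue_le_h2
end
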